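/- arXiv:1707.05216 — 2 statements merged into one kernel-verified Lean document; each statement's English description precedes it below -/
import Mathlib

section
/- Fix ω with 0 ≤ ω < 1 and let {τ_m}_{m≥1} be a sequence of real numbers with 0 ≤ τ_m < 1 for all m and lim_{m→∞} m·τ_m = 0. Then there exists M ∈ ℕ such that for all integers m ≥ M, the sign of the derivative ∂_z ₁φ₁(0;ω;q,z) at z = q^{−m+τ_m} equals (−1)^{m+1}, i.e., (−1)^{m+1} · ∂_z ₁φ₁(0;ω;q,z)|_{z=q^{−m+τ_m}} > 0. -/
/-!
Write `φ(z) = ₁φ₁(0;ω;q,z)` and let `g(z) = ∑ (-1)^k q^(k(k-1)/2) z^k / (q;q)_k` be the case `ω = 0`.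
Both `z φ'(z)` and `z g'(z)` are sums over `k` with weights `k (-1)^k q^(k(k-1)/2) z^k`.  At
`z = q^(-m)` and after multiplication by `q^(m(m+1)/2)` these weights have size
`k q^(j(j-1)/2)`, `j = k - m`, so they are concentrated near `k = m`.

* The comparison function `g` satisfies `g(z) = (1 - z) g(qz)`.  Hence it vanishes at every `q^(-m)`,
  and differentiating this equation yields the exact value
  `(-1)^(m+1) q^(m(m+1)/2) z g'(z) = (q;q)_m g(q)` at `z = q^(-m)` (`hser_value`).  This is bounded
  below by a positive constant (`qPoch_lower`, `gser_q_pos`).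
* The coefficients of `φ` and `g` differ by the factor `1 / (ω;q)_k`, and `(ω;q)_k` tends to a
  positive limit `P` at the rate `q^k` (`qPoch_limit`).  Therefore, after multiplying the normalised
  `z φ'(z)` at `z = q^(-m+τ)` by `P q^(-τ m)`, each term differs from that of `g` at `q^(-m)` by
  the factor `P / (ω;q)_k * q^(τ j) - 1 = O(q^k q^(-|j|) + τ |j| q^(-|j|))`.  Summing, the total
  error is `O(m q^m + m τ)` (`term_bound`), which tends to `0`.
-/

open Filter

/-- The finite q-shifted factorial `(a;q)_n`. -/
noncomputable def qPoch (a q : ℝ) : ℕ → ℝ := fun n => ∏ j ∈ Finset.range n, (1 - a * q ^ j)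

/-- The basic hypergeometric function `₁φ₁(0;ω;q,z)`. -/
noncomputable def phi11 (ω q z : ℝ) : ℝ :=
  ∑' k : ℕ, ((-1 : ℝ) ^ k * q ^ (k * (k - 1) / 2) * z ^ k / (qPoch ω q k * qPoch q q k))

/-! ### Power series with coefficients of size `q^(k(k-1)/2)` -/

lemma tri_succ (k : ℕ) : (k + 1) * (k + 1 - 1) / 2 = k + k * (k - 1) / 2 := by
  rw [← Nat.choose_two_right, ← Nat.choose_two_right, Nat.choose_succ_succ' k 1]
  simp

lemma tri_cast (k : ℕ) : ((k * (k - 1) / 2 : ℕ) : ℝ) = (k : ℝ) * (k - 1) / 2 := by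
  rw [← Nat.choose_two_right, Nat.cast_choose_two]

lemma summable_base {q : ℝ} (hq0 : 0 < q) (hq1 : q < 1) (R : ℝ) :
    Summable fun k : ℕ => q ^ (k * (k - 1) / 2) * R ^ k := by
  have ht : Tendsto (fun k : ℕ => q ^ k * |R|) atTop (nhds 0) := by
    simpa using (tendsto_pow_atTop_nhds_zero_of_lt_one hq0.le hq1).mul_const |R|
  refine summable_of_ratio_norm_eventually_le (r := 1 / 2) (by norm_num) ?_
  filter_upwards [ht.eventually (gt_mem_nhds (by norm_num : (0 : ℝ) < 1 / 2))] with k hk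
  rw [tri_succ, pow_add, pow_succ R]
  have : q ^ k * q ^ (k * (k - 1) / 2) * (R ^ k * R)
      = (q ^ k * R) * (q ^ (k * (k - 1) / 2) * R ^ k) := by ring
  rw [this, norm_mul]
  refine mul_le_mul_of_nonneg_right ?_ (norm_nonneg _)
  rw [norm_mul, Real.norm_eq_abs, Real.norm_eq_abs, abs_of_pos (pow_pos hq0 k)]
  exact hk.le

lemma summable_ser {q : ℝ} (hq0 : 0 < q) (hq1 : q < 1) {a : ℕ → ℝ} {K : ℝ}
    (ha : ∀ k, |a k| ≤ K * q ^ (k * (k - 1) / 2)) (z : ℝ) :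
    Summable fun k : ℕ => a k * z ^ k := by
  refine Summable.of_norm_bounded ((summable_base hq0 hq1 |z|).mul_left K) fun k => ?_
  rw [Real.norm_eq_abs, abs_mul, abs_pow, ← mul_assoc]
  exact mul_le_mul_of_nonneg_right (ha k) (by positivity)

lemma summable_kser {q : ℝ} (hq0 : 0 < q) (hq1 : q < 1) {a : ℕ → ℝ} {K : ℝ}
    (ha : ∀ k, |a k| ≤ K * q ^ (k * (k - 1) / 2)) (z : ℝ) :
    Summable fun k : ℕ => (k : ℝ) * (a k * z ^ k) := by
  refine Summable.of_norm_bounded ((summable_base hq0 hq1 (2 * |z|)).mul_left K) fun k => ?_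
  have h2 : (k : ℝ) ≤ 2 ^ k := by exact_mod_cast (Nat.lt_two_pow_self (n := k)).le
  rw [Real.norm_eq_abs, abs_mul, abs_mul, abs_pow, Nat.abs_cast, mul_pow]
  calc (k : ℝ) * (|a k| * |z| ^ k)
      ≤ 2 ^ k * ((K * q ^ (k * (k - 1) / 2)) * |z| ^ k) := by
        gcongr
        exact ha k
    _ = _ := by ring

/-- Termwise differentiation; the derivative series is left multiplied by `z`. -/
lemma deriv_ser {q : ℝ} (hq0 : 0 < q) (hq1 : q < 1) {a : ℕ → ℝ} {K : ℝ}
    (ha : ∀ k, |a k| ≤ K * q ^ (k * (k - 1) / 2)) (z : ℝ) :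
    DifferentiableAt ℝ (fun z => ∑' k : ℕ, a k * z ^ k) z ∧
    z * deriv (fun z => ∑' k : ℕ, a k * z ^ k) z = ∑' k : ℕ, (k : ℝ) * (a k * z ^ k) := by
  set R : ℝ := |z| + 1 with hR
  have hRpos : 0 < R := by positivity
  have hu : Summable fun k : ℕ => R⁻¹ * ‖(k : ℝ) * (a k * R ^ k)‖ :=
    ((summable_kser hq0 hq1 ha R).norm).mul_left _
  have hz : z ∈ Metric.ball (0 : ℝ) R := by
    simp [hR]
  have key : HasDerivAt (fun z => ∑' k : ℕ, a k * z ^ k)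
      (∑' k : ℕ, a k * ((k : ℝ) * z ^ (k - 1))) z := by
    refine hasDerivAt_tsum_of_isPreconnected (g := fun k z => a k * z ^ k)
      (g' := fun k z => a k * ((k : ℝ) * z ^ (k - 1))) hu Metric.isOpen_ball
      (convex_ball (0 : ℝ) R).isPreconnected ?_ ?_ hz (summable_ser hq0 hq1 ha z) hz
    · intro k y _
      exact (hasDerivAt_pow k y).const_mul (a k)
    · intro k y hy
      have hy' : |y| ≤ R := by
        have := hy
        simp only [Metric.mem_ball, dist_zero_right, Real.norm_eq_abs] at this
        exact this.le
      rcases k with _ | k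
      · simp
      · have : |y| ^ k ≤ R ^ k := pow_le_pow_left₀ (abs_nonneg y) hy' k
        simp only [Real.norm_eq_abs, abs_mul, abs_pow, Nat.abs_cast, Nat.add_sub_cancel,
          abs_of_pos hRpos]
        calc |a (k + 1)| * (((k + 1 : ℕ) : ℝ) * |y| ^ k)
            ≤ |a (k + 1)| * (((k + 1 : ℕ) : ℝ) * R ^ k) := by gcongr
          _ = _ := by
            rw [pow_succ]; field_simp
  refine ⟨key.differentiableAt, ?_⟩
  rw [key.deriv, ← tsum_mul_left]
  refine tsum_congr fun k => ?_
  rcases k with _ | k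
  · simp
  · rw [pow_succ, Nat.add_sub_cancel]; ring

/-! ### The finite products `(a;q)_n` -/

lemma qPoch_succ (a q : ℝ) (n : ℕ) : qPoch a q (n + 1) = qPoch a q n * (1 - a * q ^ n) := by
  simp [qPoch, Finset.prod_range_succ]

lemma aq_le {q a : ℝ} (hq0 : 0 < q) (hq1 : q < 1) (ha0 : 0 ≤ a) (n : ℕ) :
    0 ≤ a * q ^ n ∧ a * q ^ n ≤ a := by
  have h1 : q ^ n ≤ 1 := pow_le_one₀ hq0.le hq1.le
  have h0 : 0 < q ^ n := pow_pos hq0 n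
  exact ⟨by positivity, by nlinarith⟩

lemma qPoch_pos {q a : ℝ} (hq0 : 0 < q) (hq1 : q < 1) (ha0 : 0 ≤ a) (ha1 : a < 1) (n : ℕ) :
    0 < qPoch a q n := by
  refine Finset.prod_pos fun j _ => ?_
  linarith [(aq_le hq0 hq1 ha0 j).2]

lemma qPoch_le_one {q a : ℝ} (hq0 : 0 < q) (hq1 : q < 1) (ha0 : 0 ≤ a) (ha1 : a < 1) (n : ℕ) :
    qPoch a q n ≤ 1 := by
  refine Finset.prod_le_one (fun j _ => ?_) fun j _ => ?_
  · linarith [(aq_le hq0 hq1 ha0 j).2]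
  · linarith [(aq_le hq0 hq1 ha0 j).1]

/-- A uniform positive lower bound, from `1 - x ≥ exp (-x / (1 - x))` for `x < 1`. -/
lemma qPoch_lower {q a : ℝ} (hq0 : 0 < q) (hq1 : q < 1) (ha0 : 0 ≤ a) (ha1 : a < 1) :
    ∃ δ : ℝ, 0 < δ ∧ ∀ n, δ ≤ qPoch a q n := by
  refine ⟨Real.exp (-((1 - q)⁻¹ * (1 - a)⁻¹)), Real.exp_pos _, fun n => ?_⟩
  have h1 : ∀ j ∈ Finset.range n, Real.exp (-(q ^ j * (1 - a)⁻¹)) ≤ 1 - a * q ^ j := by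
    intro j _
    obtain ⟨h0, hle⟩ := aq_le hq0 hq1 ha0 j
    have hp : 0 < 1 - a * q ^ j := by linarith
    rw [← Real.le_log_iff_exp_le hp]
    have hl := Real.one_sub_inv_le_log_of_pos hp
    refine le_trans ?_ hl
    have e1 : 1 - (1 - a * q ^ j)⁻¹ = -(a * q ^ j * (1 - a * q ^ j)⁻¹) := by
      field_simp
      ring
    rw [e1]
    apply neg_le_neg
    have hqj : 0 < q ^ j := pow_pos hq0 j
    apply mul_le_mul
    · nlinarith
    · exact inv_anti₀ (by linarith) (by linarith)
    · exact inv_nonneg.2 hp.le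
    · exact hqj.le
  refine le_trans ?_ (Finset.prod_le_prod (fun j _ => (Real.exp_pos _).le) h1)
  rw [← Real.exp_sum, Real.exp_le_exp, Finset.sum_neg_distrib, ← Finset.sum_mul]
  apply neg_le_neg
  refine mul_le_mul_of_nonneg_right ?_ (inv_nonneg.2 (by linarith))
  rw [← tsum_geometric_of_lt_one hq0.le hq1]
  exact (summable_geometric_of_lt_one hq0.le hq1).sum_le_tsum _ fun i _ => (pow_pos hq0 i).le

/-- `(a;q)_n` converges to a positive limit `P`, with relative error `O(q^n)`. -/
lemma qPoch_limit {q a : ℝ} (hq0 : 0 < q) (hq1 : q < 1) (ha0 : 0 ≤ a) (ha1 : a < 1) :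
    ∃ P C : ℝ, 0 < P ∧ 0 < C ∧ ∀ n, |P / qPoch a q n - 1| ≤ C * q ^ n := by
  obtain ⟨δ, hδ, hlow⟩ := qPoch_lower hq0 hq1 ha0 ha1
  have h1q : 0 < 1 - q := by linarith
  have hanti : Antitone (qPoch a q) := by
    refine antitone_nat_of_succ_le fun n => ?_
    rw [qPoch_succ]
    have := qPoch_pos hq0 hq1 ha0 ha1 n
    nlinarith [(aq_le hq0 hq1 ha0 n).1]
  have hbdd : BddBelow (Set.range (qPoch a q)) := ⟨δ, by rintro _ ⟨n, rfl⟩; exact hlow n⟩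
  have hlim := tendsto_atTop_ciInf hanti hbdd
  set P := ⨅ n, qPoch a q n
  have hPle : ∀ n, P ≤ qPoch a q n := fun n => ciInf_le hbdd n
  have hδP : δ ≤ P := le_ciInf hlow
  -- `(a;q)_n - q^n / (1 - q)` increases with `n` and has the same limit `P`.
  have hmono : Monotone fun n => qPoch a q n - q ^ n / (1 - q) := by
    refine monotone_nat_of_le_succ fun n => ?_
    have hp := qPoch_pos hq0 hq1 ha0 ha1 n
    have hp1 := qPoch_le_one hq0 hq1 ha0 ha1 n
    have hqn : 0 < q ^ n := pow_pos hq0 n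
    have e : q ^ n / (1 - q) = q ^ n + q ^ (n + 1) / (1 - q) := by
      field_simp; ring
    rw [qPoch_succ, e]
    have : qPoch a q n * (a * q ^ n) ≤ 1 * (1 * q ^ n) := by gcongr
    linarith
  have hlim2 : Tendsto (fun n => qPoch a q n - q ^ n / (1 - q)) atTop (nhds P) := by
    simpa using hlim.sub ((tendsto_pow_atTop_nhds_zero_of_lt_one hq0.le hq1).div_const (1 - q))
  refine ⟨P, ((1 - q) * δ)⁻¹, lt_of_lt_of_le hδ hδP, by positivity, fun n => ?_⟩
  have hp := qPoch_pos hq0 hq1 ha0 ha1 n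
  have hle1 : P / qPoch a q n ≤ 1 := by rw [div_le_one hp]; exact hPle n
  have h2 := hmono.ge_of_tendsto hlim2 n
  rw [abs_sub_comm, abs_of_nonneg (by linarith)]
  have e : 1 - P / qPoch a q n = (qPoch a q n - P) / qPoch a q n := by field_simp
  rw [e, div_le_iff₀ hp]
  calc qPoch a q n - P ≤ q ^ n / (1 - q) := by linarith
    _ = ((1 - q) * δ)⁻¹ * q ^ n * δ := by field_simp
    _ ≤ _ := by
      refine mul_le_mul_of_nonneg_left (hlow n) ?_
      have := pow_pos hq0 n
      positivity

/-! ### The comparison function, `ω = 0` -/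

/-- Coefficients of the power series of `(z;q)_∞ = ₁φ₁(0;0;q,z)`. -/
noncomputable def gcoef (q : ℝ) (k : ℕ) : ℝ := (-1) ^ k * q ^ (k * (k - 1) / 2) / qPoch q q k

/-- The function `₁φ₁(0;0;q,z)`. -/
noncomputable def gser (q z : ℝ) : ℝ := ∑' k : ℕ, gcoef q k * z ^ k

/-- The function `z g'(z)`, where `g` is `gser q`, given by its power series. -/
noncomputable def hser (q z : ℝ) : ℝ := ∑' k : ℕ, (k : ℝ) * (gcoef q k * z ^ k)

lemma gcoef_bound {q : ℝ} (hq0 : 0 < q) (hq1 : q < 1) :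
    ∃ K, ∀ k, |gcoef q k| ≤ K * q ^ (k * (k - 1) / 2) := by
  obtain ⟨δ, hδ, hlow⟩ := qPoch_lower hq0 hq1 hq0.le hq1
  refine ⟨δ⁻¹, fun k => ?_⟩
  have hp := qPoch_pos hq0 hq1 hq0.le hq1 k
  rw [gcoef, abs_div, abs_mul, abs_pow, abs_neg, abs_one, one_pow, one_mul, abs_of_pos hp,
    abs_of_pos (pow_pos hq0 _), div_eq_inv_mul]
  gcongr
  exact hlow k

lemma gcoef_succ {q : ℝ} (hq0 : 0 < q) (hq1 : q < 1) (k : ℕ) :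
    gcoef q (k + 1) * (1 - q ^ (k + 1)) = -(q ^ k * gcoef q k) := by
  have hp := qPoch_pos hq0 hq1 hq0.le hq1 k
  have hlt : q ^ (k + 1) < 1 := pow_lt_one₀ hq0.le hq1 (Nat.succ_ne_zero k)
  have h1 : 1 - q * q ^ k ≠ 0 := by rw [← pow_succ']; linarith
  rw [gcoef, gcoef, tri_succ, qPoch_succ, pow_add q k, pow_succ' q k,
    mul_comm (qPoch q q k), ← div_div, div_mul_eq_mul_div, div_mul_cancel₀ _ h1]
  ring

lemma gser_rec {q : ℝ} (hq0 : 0 < q) (hq1 : q < 1) (z : ℝ) :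
    gser q z = (1 - z) * gser q (q * z) := by
  obtain ⟨K, hK⟩ := gcoef_bound hq0 hq1
  have s1 := summable_ser hq0 hq1 hK z
  have s2 := summable_ser hq0 hq1 hK (q * z)
  have h : gser q z - gser q (q * z) = -z * gser q (q * z) := by
    unfold gser
    rw [← s1.tsum_sub s2, (s1.sub s2).tsum_eq_zero_add, ← tsum_mul_left]
    simp only [pow_zero, sub_self, zero_add]
    refine tsum_congr fun k => ?_
    have := gcoef_succ hq0 hq1 k
    calc _ = (gcoef q (k + 1) * (1 - q ^ (k + 1))) * z ^ (k + 1) := by rw [mul_pow]; ring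
      _ = _ := by rw [this, mul_pow, pow_succ z]; ring
  linarith

lemma hser_rec {q : ℝ} (hq0 : 0 < q) (hq1 : q < 1) (z : ℝ) :
    hser q z = (1 - z) * hser q (q * z) - z * gser q (q * z) := by
  obtain ⟨K, hK⟩ := gcoef_bound hq0 hq1
  have s0 := summable_ser hq0 hq1 hK (q * z)
  have s1 := summable_kser hq0 hq1 hK z
  have s2 := summable_kser hq0 hq1 hK (q * z)
  have h : hser q z - hser q (q * z) = -z * (hser q (q * z) + gser q (q * z)) := by
    unfold hser gser
    rw [← s1.tsum_sub s2, (s1.sub s2).tsum_eq_zero_add, ← s2.tsum_add s0, ← tsum_mul_left]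
    simp only [Nat.cast_zero, zero_mul, sub_self, zero_add]
    refine tsum_congr fun k => ?_
    have := gcoef_succ hq0 hq1 k
    calc _ = ((k : ℝ) + 1) * ((gcoef q (k + 1) * (1 - q ^ (k + 1))) * z ^ (k + 1)) := by
          rw [mul_pow]; push_cast; ring
      _ = _ := by rw [this, mul_pow, pow_succ z]; ring
  linarith

lemma gser_zero {q : ℝ} (hq0 : 0 < q) (hq1 : q < 1) (m : ℕ) : gser q (q⁻¹ ^ m) = 0 := by
  induction m with
  | zero => rw [gser_rec hq0 hq1]; simp
  | succ m ih =>
    rw [gser_rec hq0 hq1, pow_succ', mul_inv_cancel_left₀ hq0.ne', ih, mul_zero]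

/-- The normalised value of `z g'(z)` at `z = q^(-m)`. -/
lemma hser_value {q : ℝ} (hq0 : 0 < q) (hq1 : q < 1) (m : ℕ) :
    (-1) ^ (m + 1) * q ^ ((m + 1) * m / 2) * hser q (q⁻¹ ^ m) = qPoch q q m * gser q q := by
  induction m with
  | zero => rw [hser_rec hq0 hq1]; simp [qPoch]
  | succ m ih =>
    have ht := tri_succ (m + 1)
    simp only [Nat.add_sub_cancel] at ht
    rw [hser_rec hq0 hq1, pow_succ' q⁻¹, mul_inv_cancel_left₀ hq0.ne', gser_zero hq0 hq1, mul_zero,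
      sub_zero, qPoch_succ, ht, pow_add q (m + 1), ← pow_succ']
    have e : q ^ (m + 1) * (1 - q⁻¹ ^ (m + 1)) = -(1 - q * q ^ m) := by
      rw [mul_sub, ← mul_pow, mul_inv_cancel₀ hq0.ne', one_pow, pow_succ']; ring
    calc _ = -(q ^ (m + 1) * (1 - q⁻¹ ^ (m + 1))) *
          ((-1) ^ (m + 1) * q ^ ((m + 1) * m / 2) * hser q (q⁻¹ ^ m)) := by ring
      _ = _ := by rw [e, ih]; ring

lemma gser_q_pos {q : ℝ} (hq0 : 0 < q) (hq1 : q < 1) : 0 < gser q q := by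
  obtain ⟨K, hK⟩ := gcoef_bound hq0 hq1
  have hrec : ∀ n : ℕ, gser q q = qPoch q q n * gser q (q ^ (n + 1)) := by
    intro n
    induction n with
    | zero => simp [qPoch]
    | succ n ih =>
      rw [ih, gser_rec hq0 hq1 (q ^ (n + 1)), qPoch_succ, ← pow_succ', ← pow_succ']; ring
  have hcont : ContinuousAt (gser q) 0 := (deriv_ser hq0 hq1 hK 0).1.continuousAt
  have h0 : gser q 0 = 1 := by
    unfold gser
    rw [tsum_eq_single 0 (fun k hk => by simp [hk])]
    simp [gcoef, qPoch]
  have ht : Tendsto (fun n : ℕ => gser q (q ^ (n + 1))) atTop (nhds 1) := by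
    rw [← h0]
    exact hcont.tendsto.comp
      ((tendsto_pow_atTop_nhds_zero_of_lt_one hq0.le hq1).comp (tendsto_add_atTop_nat 1))
  obtain ⟨n, hn⟩ := (ht.eventually (lt_mem_nhds zero_lt_one)).exists
  rw [hrec n]
  exact mul_pos (qPoch_pos hq0 hq1 hq0.le hq1 n) hn

/-! ### Comparison of the two series -/

/-- The normalised weights are Gaussian in `j = k - m`. -/
lemma weight_eq {q : ℝ} (hq0 : 0 < q) (m k : ℕ) :
    q ^ ((m + 1) * m / 2) * (q ^ (k * (k - 1) / 2) * (q⁻¹ ^ m) ^ k)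
      = q ^ (((k : ℝ) - m) * ((k : ℝ) - m - 1) / 2) := by
  have h1 := tri_cast (m + 1)
  have h2 := tri_cast k
  simp only [Nat.add_sub_cancel] at h1
  rw [← pow_mul, inv_pow, ← Real.rpow_natCast, ← Real.rpow_natCast, ← Real.rpow_natCast,
    ← Real.rpow_neg hq0.le, ← Real.rpow_add hq0, ← Real.rpow_add hq0, h1, h2]
  congr 1
  push_cast
  ring

lemma summable_majorant {q : ℝ} (hq0 : 0 < q) (hq1 : q < 1) :
    Summable fun j : ℤ => (1 + |(j : ℝ)|) ^ 2 * q ^ j.natAbs := by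
  have hn : Summable fun n : ℕ => (1 + (n : ℝ)) ^ 2 * q ^ n := by
    have hnorm : ‖q‖ < 1 := by rwa [Real.norm_eq_abs, abs_of_pos hq0]
    have a0 := summable_pow_mul_geometric_of_norm_lt_one 0 hnorm
    have a1 := summable_pow_mul_geometric_of_norm_lt_one 1 hnorm
    have a2 := summable_pow_mul_geometric_of_norm_lt_one 2 hnorm
    refine ((a0.add (a1.mul_left 2)).add a2).congr fun n => ?_
    ring
  refine Summable.of_nat_of_neg ?_ ?_
  · simpa using hn
  · simpa using hn

lemma abs_rpow_sub_one {q : ℝ} (hq0 : 0 < q) (hq1 : q < 1) {t j : ℝ} (ht0 : 0 ≤ t) (ht1 : t ≤ 1) :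
    q ^ (t * j) ≤ q ^ (-|j|) ∧ |q ^ (t * j) - 1| ≤ t * |j| * (-Real.log q) * q ^ (-|j|) := by
  have hlog : Real.log q < 0 := Real.log_neg hq0 hq1
  have habs : t * |j| ≤ |j| := by nlinarith [abs_nonneg j]
  have hle : -|j| ≤ t * j := by nlinarith [neg_abs_le j]
  refine ⟨Real.rpow_le_rpow_of_exponent_ge hq0 hq1.le hle, ?_⟩
  rw [Real.rpow_def_of_pos hq0, Real.rpow_def_of_pos hq0]
  set x := Real.log q * (t * j) with hx
  have hxa : |x| = t * |j| * (-Real.log q) := by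
    rw [hx, abs_mul, abs_mul, abs_of_neg hlog, abs_of_nonneg ht0]; ring
  have h1 : |Real.exp x - 1| ≤ |x| * Real.exp |x| := by
    rcases le_total 0 x with h | h
    · rw [abs_of_nonneg h, abs_of_nonneg (by linarith [Real.one_le_exp h])]
      have := Real.add_one_le_exp (-x)
      have e : Real.exp x * Real.exp (-x) = 1 := by rw [← Real.exp_add]; simp
      nlinarith [Real.exp_pos x]
    · have h3 := Real.add_one_le_exp x
      have h4 : Real.exp x ≤ 1 := Real.exp_le_one_iff.2 h
      rw [abs_sub_comm, abs_of_nonneg (by linarith), abs_of_nonpos h]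
      nlinarith [Real.one_le_exp (neg_nonneg.2 h)]
  rw [hxa] at h1
  refine h1.trans ?_
  have : Real.exp (t * |j| * (-Real.log q)) ≤ Real.exp (Real.log q * (-|j|)) := by
    apply Real.exp_le_exp.2; nlinarith
  refine mul_le_mul_of_nonneg_left this ?_
  have : 0 ≤ -Real.log q := by linarith
  positivity

/-- Each term of the difference is at most a small factor `m (q^m + t)` times a fixed summable
function of `j = k - m`; here `ρ` plays the role of `P / (ω;q)_k`. -/
lemma term_bound {q : ℝ} (hq0 : 0 < q) (hq1 : q < 1) {C t ρ : ℝ} (hC : 0 < C) (ht0 : 0 ≤ t)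
    (ht1 : t ≤ 1) (m k : ℕ) (hm : 1 ≤ m) (hρ : |ρ - 1| ≤ C * q ^ k) :
    (k : ℝ) * q ^ (((k : ℝ) - m) * ((k : ℝ) - m - 1) / 2) * |ρ * q ^ (t * ((k : ℝ) - m)) - 1|
      ≤ (C + -Real.log q) * q ^ (-7 : ℝ) * ((m : ℝ) * (q ^ m + t)) *
        ((1 + |(((k : ℤ) - (m : ℤ) : ℤ) : ℝ)|) ^ 2 * q ^ ((k : ℤ) - (m : ℤ)).natAbs) := by
  have hlog : 0 < -Real.log q := by linarith [Real.log_neg hq0 hq1]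
  have hnat : q ^ ((k : ℤ) - (m : ℤ)).natAbs = q ^ |(k : ℝ) - m| := by
    rw [← Real.rpow_natCast, Nat.cast_natAbs]; push_cast; rfl
  have hm1 : (1 : ℝ) ≤ m := by exact_mod_cast hm
  rw [hnat]
  push_cast
  obtain ⟨j, hj⟩ : ∃ j : ℝ, j = (k : ℝ) - m := ⟨_, rfl⟩
  have hqk : q ^ k = q ^ m * q ^ j := by
    rw [← Real.rpow_natCast, ← Real.rpow_natCast, ← Real.rpow_add hq0, hj]; congr 1; ring
  have hkj : (k : ℝ) = m + j := by rw [hj]; ring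
  rw [← hj]
  obtain ⟨h1, h2⟩ := abs_rpow_sub_one (j := j) hq0 hq1 ht0 ht1
  set y := |j| with hy
  have hy0 : 0 ≤ y := abs_nonneg j
  have hk : (k : ℝ) ≤ m * (1 + y) := by
    rw [hkj]; nlinarith [le_abs_self j]
  have hqm : 0 < q ^ m := pow_pos hq0 m
  have hqj : q ^ j ≤ q ^ (-y) :=
    Real.rpow_le_rpow_of_exponent_ge hq0 hq1.le (neg_abs_le j)
  have hA : 0 < q ^ (-y) := Real.rpow_pos_of_pos hq0 _
  have hA1 : 1 ≤ q ^ (-y) := Real.one_le_rpow_of_pos_of_le_one_of_nonpos hq0 hq1.le (by linarith)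
  have hd : |ρ * q ^ (t * j) - 1| ≤
      (C + -Real.log q) * (q ^ m + t) * (1 + y) * (q ^ (-y) * q ^ (-y)) := by
    have e : ρ * q ^ (t * j) - 1 = (ρ - 1) * q ^ (t * j) + (q ^ (t * j) - 1) := by ring
    have p1 : |ρ - 1| * q ^ (t * j) ≤ (C * (q ^ m * q ^ (-y))) * q ^ (-y) := by
      refine mul_le_mul (hρ.trans ?_) h1 (Real.rpow_pos_of_pos hq0 _).le (by positivity)
      rw [hqk]; gcongr
    have p2 : t * y * (-Real.log q) * q ^ (-y) ≤
        t * y * (-Real.log q) * (q ^ (-y) * q ^ (-y)) := by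
      refine mul_le_mul_of_nonneg_left ?_ (by positivity)
      nlinarith
    have p3 : |ρ * q ^ (t * j) - 1| ≤ |ρ - 1| * q ^ (t * j) + |q ^ (t * j) - 1| := by
      rw [e]
      refine (abs_add_le _ _).trans ?_
      rw [abs_mul, abs_of_pos (Real.rpow_pos_of_pos hq0 (t * j))]
    calc _ ≤ (C * q ^ m + t * y * (-Real.log q)) * (q ^ (-y) * q ^ (-y)) := by linarith
      _ ≤ _ := by
        refine mul_le_mul_of_nonneg_right ?_ (by positivity)
        have r1 : 0 ≤ C * t * (1 + y) := by positivity
        have r2 : 0 ≤ -Real.log q * q ^ m * (1 + y) := by positivity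
        have r3 : 0 ≤ C * q ^ m * y := by positivity
        have r4 : 0 ≤ -Real.log q * t := by positivity
        nlinarith
  -- Completing the square: `j (j - 1) / 2 - 2 |j| ≥ |j| - 7`.
  have hw : q ^ (j * (j - 1) / 2) * (q ^ (-y) * q ^ (-y)) ≤ q ^ (-7 : ℝ) * q ^ y := by
    rw [← Real.rpow_add hq0, ← Real.rpow_add hq0, ← Real.rpow_add hq0]
    refine Real.rpow_le_rpow_of_exponent_ge hq0 hq1.le ?_
    have : j * j = y * y := (abs_mul_abs_self j).symm
    nlinarith [le_abs_self j, sq_nonneg (y - 7 / 2)]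
  calc _ ≤ (m * (1 + y)) * q ^ (j * (j - 1) / 2) *
        ((C + -Real.log q) * (q ^ m + t) * (1 + y) * (q ^ (-y) * q ^ (-y))) := by
        have := Real.rpow_pos_of_pos hq0 (j * (j - 1) / 2)
        gcongr
    _ = (m * (1 + y)) * ((C + -Real.log q) * (q ^ m + t) * (1 + y)) *
        (q ^ (j * (j - 1) / 2) * (q ^ (-y) * q ^ (-y))) := by ring
    _ ≤ (m * (1 + y)) * ((C + -Real.log q) * (q ^ m + t) * (1 + y)) *
        (q ^ (-7 : ℝ) * q ^ y) := by
        refine mul_le_mul_of_nonneg_left hw ?_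
        positivity
    _ = _ := by ring

theorem stmt9 (q ω : ℝ) (hq0 : 0 < q) (hq1 : q < 1) (hω0 : 0 ≤ ω) (hω1 : ω < 1)
    (τ : ℕ → ℝ) (hτ : ∀ m, 1 ≤ m → 0 ≤ τ m ∧ τ m < 1)
    (hlim : Tendsto (fun m : ℕ => (m : ℝ) * τ m) atTop (nhds 0)) :
    ∃ M : ℕ, ∀ m, M ≤ m →
      0 < (-1 : ℝ) ^ (m + 1) * deriv (fun z => phi11 ω q z) (q ^ (-(m : ℝ) + τ m)) := by
  obtain ⟨P, C, hP, hC, hPC⟩ := qPoch_limit hq0 hq1 hω0 hω1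
  obtain ⟨δ, hδ, hlow⟩ := qPoch_lower hq0 hq1 hq0.le hq1
  obtain ⟨δ', hδ', hlow'⟩ := qPoch_lower hq0 hq1 hω0 hω1
  obtain ⟨K, hK⟩ := gcoef_bound hq0 hq1
  have hg := gser_q_pos hq0 hq1
  have hlog : 0 < -Real.log q := by linarith [Real.log_neg hq0 hq1]
  set a : ℕ → ℝ := fun k => gcoef q k / qPoch ω q k with ha_def
  have ha : ∀ k, |a k| ≤ (K * δ'⁻¹) * q ^ (k * (k - 1) / 2) := by
    intro k
    have hp := qPoch_pos hq0 hq1 hω0 hω1 k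
    have h1 : (qPoch ω q k)⁻¹ ≤ δ'⁻¹ := inv_anti₀ hδ' (hlow' k)
    have h2 := hK k
    rw [ha_def]
    simp only
    rw [abs_div, abs_of_pos hp, div_eq_mul_inv]
    calc _ ≤ (K * q ^ (k * (k - 1) / 2)) * δ'⁻¹ :=
          mul_le_mul h2 h1 (inv_nonneg.2 hp.le) ((abs_nonneg _).trans h2)
      _ = _ := by ring
  have hphi : (fun z => phi11 ω q z) = fun z => ∑' k : ℕ, a k * z ^ k := by
    funext z
    unfold phi11
    refine tsum_congr fun k => ?_
    have hp := qPoch_pos hq0 hq1 hω0 hω1 k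
    have hp' := qPoch_pos hq0 hq1 hq0.le hq1 k
    simp only [ha_def, gcoef]
    field_simp
  set B : ℤ → ℝ := fun j => (1 + |(j : ℝ)|) ^ 2 * q ^ j.natAbs with hB
  have hBs : Summable B := summable_majorant hq0 hq1
  have hB0 : ∀ j, 0 ≤ B j := fun j => by
    have := pow_pos hq0 j.natAbs
    simp only [hB]; positivity
  set D : ℝ := δ⁻¹ * ((C + -Real.log q) * q ^ (-7 : ℝ)) with hD
  have hD0 : 0 < D := by
    have := Real.rpow_pos_of_pos hq0 (-7 : ℝ)
    positivity
  have hsmall : Tendsto (fun m : ℕ => D * ((m : ℝ) * (q ^ m + τ m)) * ∑' j, B j) atTop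
      (nhds 0) := by
    have h1 : Tendsto (fun m : ℕ => (m : ℝ) * q ^ m) atTop (nhds 0) :=
      tendsto_self_mul_const_pow_of_lt_one hq0.le hq1
    have h2 := ((h1.add hlim).const_mul D).mul_const (∑' j, B j)
    simp only [add_zero, mul_zero, zero_mul] at h2
    refine h2.congr fun m => ?_
    ring
  have hev := (hsmall.eventually (gt_mem_nhds (mul_pos hδ hg))).and (eventually_ge_atTop 1)
  obtain ⟨M, hM⟩ := eventually_atTop.1 hev
  refine ⟨M, fun m hm => ?_⟩
  obtain ⟨hlt, hm1⟩ := hM m hm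
  obtain ⟨ht0, ht1⟩ := hτ m hm1
  set t := τ m with ht
  set z : ℝ := q ^ (-(m : ℝ) + t) with hz
  have hz0 : 0 < z := Real.rpow_pos_of_pos hq0 _
  have hder := (deriv_ser hq0 hq1 ha z).2
  rw [← hphi] at hder
  set N : ℝ := q ^ ((m + 1) * m / 2) with hN
  have hN0 : 0 < N := pow_pos hq0 _
  set S : ℝ := P * q ^ (-(t * m)) with hS
  have hS0 : 0 < S := mul_pos hP (Real.rpow_pos_of_pos hq0 _)
  have s1 := (summable_kser hq0 hq1 ha z).mul_left (S * N)
  have s2 := (summable_kser hq0 hq1 hK (q⁻¹ ^ m)).mul_left N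
  have hzk : ∀ k : ℕ, q ^ (-(t * m)) * z ^ k = (q⁻¹ ^ m) ^ k * q ^ (t * ((k : ℝ) - m)) := by
    intro k
    rw [hz, ← Real.rpow_natCast (q ^ (-(m : ℝ) + t)), ← Real.rpow_mul hq0.le, ← pow_mul, inv_pow,
      ← Real.rpow_natCast q, ← Real.rpow_neg hq0.le, ← Real.rpow_add hq0, ← Real.rpow_add hq0]
    congr 1
    push_cast
    ring
  have hterm : ∀ k : ℕ, ‖S * N * ((k : ℝ) * (a k * z ^ k)) -
      N * ((k : ℝ) * (gcoef q k * (q⁻¹ ^ m) ^ k))‖ ≤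
      D * ((m : ℝ) * (q ^ m + t)) * B ((k : ℤ) - (m : ℤ)) := by
    intro k
    have hp := qPoch_pos hq0 hq1 hω0 hω1 k
    have hp' := qPoch_pos hq0 hq1 hq0.le hq1 k
    have htb := term_bound hq0 hq1 hC ht0 ht1.le m k hm1 (hPC k)
    rw [← weight_eq hq0 m k] at htb
    have e : S * N * ((k : ℝ) * (a k * z ^ k)) - N * ((k : ℝ) * (gcoef q k * (q⁻¹ ^ m) ^ k))
        = (-1) ^ k * (qPoch q q k)⁻¹ * (((k : ℝ) * (N * (q ^ (k * (k - 1) / 2) * (q⁻¹ ^ m) ^ k))) *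
          (P / qPoch ω q k * q ^ (t * ((k : ℝ) - m)) - 1)) := by
      calc _ = P * N * ((k : ℝ) * (a k * (q ^ (-(t * m)) * z ^ k)))
            - N * ((k : ℝ) * (gcoef q k * (q⁻¹ ^ m) ^ k)) := by rw [hS]; ring
        _ = _ := by
          rw [hzk]; simp only [ha_def, gcoef]; field_simp
    have hw0 : 0 ≤ (k : ℝ) * (N * (q ^ (k * (k - 1) / 2) * (q⁻¹ ^ m) ^ k)) := by
      have := pow_pos hq0 (k * (k - 1) / 2)
      positivity
    rw [e, Real.norm_eq_abs, abs_mul, abs_mul, abs_pow, abs_neg, abs_one, one_pow, one_mul,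
      abs_of_pos (inv_pos.2 hp'), abs_mul _ (_ - 1), abs_of_nonneg hw0]
    calc _ ≤ δ⁻¹ * _ := mul_le_mul (inv_anti₀ hδ (hlow k)) htb (by positivity) (by positivity)
      _ = _ := by rw [hD, hB]; ring
  have hinj : Function.Injective fun k : ℕ => (k : ℤ) - (m : ℤ) := fun x y h => by
    simpa using h
  have sB := (hBs.comp_injective hinj).mul_left (D * ((m : ℝ) * (q ^ m + t)))
  have hdiff := tsum_of_norm_bounded sB.hasSum hterm
  rw [s1.tsum_sub s2, tsum_mul_left, tsum_mul_left, tsum_mul_left, ← hder] at hdiff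
  have hBle : ∑' k : ℕ, (B ∘ fun k : ℕ => (k : ℤ) - (m : ℤ)) k ≤ ∑' j, B j :=
    (hBs.comp_injective hinj).tsum_le_tsum_of_inj _ hinj (fun j _ => hB0 j) (fun _ => le_rfl) hBs
  have hqm : 0 < q ^ m := pow_pos hq0 m
  have hdiff2 := (hdiff.trans (mul_le_mul_of_nonneg_left hBle (by positivity))).trans_lt hlt
  have hval := hser_value hq0 hq1 m
  rw [← hN] at hval
  unfold hser at hval
  have hsgn : |(-1 : ℝ) ^ (m + 1)| = 1 := by simp
  set F := deriv (fun z => phi11 ω q z) z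
  set X := ∑' k : ℕ, (k : ℝ) * (gcoef q k * (q⁻¹ ^ m) ^ k)
  have h3 : |(-1 : ℝ) ^ (m + 1) * (S * N * (z * F) - N * X)| < δ * gser q q := by
    rw [abs_mul, hsgn, one_mul]; exact hdiff2
  have h4 : δ * gser q q ≤ qPoch q q m * gser q q := mul_le_mul_of_nonneg_right (hlow m) hg.le
  have h5 : 0 < (S * N * z) * ((-1 : ℝ) ^ (m + 1) * F) := by
    have h6 := (abs_lt.1 h3).1
    have h7 : (-1 : ℝ) ^ (m + 1) * (S * N * (z * F) - N * X) =
      (S * N * z) * ((-1 : ℝ) ^ (m + 1) * F) - (-1) ^ (m + 1) * N * X := by ring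
    linarith
  exact pos_of_mul_pos_right h5 (by positivity)
end

section
/- (q-analogue of the Riemann–Lebesgue theorem) Let f : (0,1] → ℝ be a function such that t ↦ t^{1/2} f(t) belongs to L_q²[0,1], i.e., Σ_{n=0}^{∞} q^n · q^n |f(q^n)|² < ∞. Then lim_{m→∞} ∫₀¹ t f(t) J_ν(q·j_{mν}·t;q²) d_q t = 0. -/
/-! Write `J = J_ν(·;q²)`. Multiplying the power series by `(1 - q^{2k})(1 - q^{2ν+2k})` termwise gives
the second order q-difference equation `J(z) + J(q²z) = (c - d z²) J(qz)` with `c`, `d > 0`.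

Fix `s` with `max(-ν, 0) < s < 1`. If `J(z) = 0`, the equation, run along the lattice `q^n z` from
the initial value `0` at `n = 0`, forces `|J(q^n z)| ≤ q^s |J(q^{n+1} z)|` as long as `q^n z` exceeds
a constant `R`, because there `|c - d (q^n z)²| ≥ q^s + q^{-s}`. Hence `|J(x)| x^s` increases along
the lattice until the region `x ≤ R` is reached. On that region `|J(x)| ≤ C x^ν ≤ C' x^{-s}`, so
`|J(q^n z)| ≤ C' (q^n z)^{-s}` for every positive zero `z` and every `n ≥ 0`, with `C'` independent
of `z` (`qBessel_lattice_bound`).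

Consequently the q-integral is at most a constant times `j_m^{-s} ∑ q^n |f(q^n)| (q^{1-s})^n`, and
the series converges since both `q^n f(q^n)` and `(q^{1-s})^n` are square-summable. Finally
`j_m → ∞`: a finite limit would be an accumulation point of zeros of an entire function that equals
`1` at the origin (`zeros_tendsto_atTop`).
-/

open Filter

/-- The infinite q-shifted factorial `(a;q)_∞`. -/
noncomputable def qPochInf (a q : ℝ) : ℝ := ∏' j : ℕ, (1 - a * q ^ j)

/-- The third Jackson (Hahn–Exton) q-Bessel function `J_ν(z;q²)` (base `q²`). -/
noncomputable def qBessel (ν q z : ℝ) : ℝ :=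
  z ^ ν * (qPochInf (q ^ (2 * (ν + 1))) (q ^ 2) / qPochInf (q ^ 2) (q ^ 2)) *
    ∑' k : ℕ, ((-1 : ℝ) ^ k * q ^ (k * (k + 1)) * z ^ (2 * k) /
      (qPoch (q ^ (2 * (ν + 1))) (q ^ 2) k * qPoch (q ^ 2) (q ^ 2) k))

/-- The Thomae–Jackson q-integral of `g` over `[0,1]`. -/
noncomputable def qInt (q : ℝ) (g : ℝ → ℝ) : ℝ := (1 - q) * ∑' n : ℕ, g (q ^ n) * q ^ n

/-! ### The power series -/

/-- The coefficients of the power series of `z^{-ν} J_ν(z;q²)` in the variable `z²`, up to the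
constant prefactor. -/
noncomputable def besselCoeff (ν q : ℝ) (k : ℕ) : ℝ :=
  (-1 : ℝ) ^ k * q ^ (k * (k + 1)) / (qPoch (q ^ (2 * (ν + 1))) (q ^ 2) k * qPoch (q ^ 2) (q ^ 2) k)

/-- The entire function `w ↦ ∑ besselCoeff k * w ^ k`. -/
noncomputable def besselSeries (ν q w : ℝ) : ℝ := ∑' k : ℕ, besselCoeff ν q k * w ^ k

/-- The constant prefactor of `J_ν(z;q²)`. -/
noncomputable def besselConst (ν q : ℝ) : ℝ :=
  qPochInf (q ^ (2 * (ν + 1))) (q ^ 2) / qPochInf (q ^ 2) (q ^ 2)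

lemma qBessel_eq (ν q z : ℝ) :
    qBessel ν q z = z ^ ν * besselConst ν q * besselSeries ν q (z ^ 2) := by
  unfold qBessel besselConst besselSeries besselCoeff
  congr 1
  refine tsum_congr fun k => ?_
  rw [pow_mul]
  ring

lemma qPoch_pos_s12 {a p : ℝ} (ha : a < 1) (ha0 : 0 ≤ a) (hp0 : 0 ≤ p) (hp : p ≤ 1) (n : ℕ) :
    0 < qPoch a p n := by
  unfold qPoch
  refine Finset.prod_pos fun i _ => ?_
  have h1 : p ^ i ≤ 1 := pow_le_one₀ hp0 hp
  nlinarith [pow_nonneg hp0 i]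

section
variable {q ν : ℝ}

lemma rpow_base_lt_one (hq0 : 0 < q) (hq1 : q < 1) (hν : -1 < ν) : q ^ (2 * (ν + 1)) < 1 :=
  Real.rpow_lt_one hq0.le hq1 (by linarith)

lemma rpow_base_eq (hq0 : 0 < q) : q ^ (2 * (ν + 1)) = (q ^ ν) ^ 2 * q ^ 2 := by
  rw [← Real.rpow_natCast, ← Real.rpow_mul hq0.le, ← Real.rpow_natCast q, ← Real.rpow_add hq0]
  congr 1
  push_cast
  ring

lemma besselCoeff_ne_zero (hq0 : 0 < q) (hq1 : q < 1) (hν : -1 < ν) (k : ℕ) :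
    besselCoeff ν q k ≠ 0 := by
  have h1 := qPoch_pos_s12 (rpow_base_lt_one hq0 hq1 hν) (Real.rpow_nonneg hq0.le _)
    (sq_nonneg q) (pow_le_one₀ hq0.le hq1.le) k
  have h2 := qPoch_pos_s12 (pow_lt_one₀ hq0.le hq1 two_ne_zero) (sq_nonneg q)
    (sq_nonneg q) (pow_le_one₀ hq0.le hq1.le) k
  unfold besselCoeff
  have := pow_pos hq0 (k * (k + 1))
  positivity

lemma besselCoeff_succ (hq0 : 0 < q) (hq1 : q < 1) (hν : -1 < ν) (k : ℕ) :
    besselCoeff ν q (k + 1) * ((1 - (q ^ ν) ^ 2 * (q ^ 2) ^ (k + 1)) * (1 - (q ^ 2) ^ (k + 1))) =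
      -(q ^ 2) ^ (k + 1) * besselCoeff ν q k := by
  have h1 := fun k => (qPoch_pos_s12 (rpow_base_lt_one hq0 hq1 hν) (Real.rpow_nonneg hq0.le _)
    (sq_nonneg q) (pow_le_one₀ hq0.le hq1.le) k).ne'
  have h2 := fun k => (qPoch_pos_s12 (pow_lt_one₀ hq0.le hq1 two_ne_zero) (sq_nonneg q)
    (sq_nonneg q) (pow_le_one₀ hq0.le hq1.le) k).ne'
  have e1 : qPoch (q ^ (2 * (ν + 1))) (q ^ 2) (k + 1) =
      qPoch (q ^ (2 * (ν + 1))) (q ^ 2) k * (1 - (q ^ ν) ^ 2 * (q ^ 2) ^ (k + 1)) := by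
    rw [qPoch, Finset.prod_range_succ, ← qPoch, rpow_base_eq hq0]
    ring
  have e2 : qPoch (q ^ 2) (q ^ 2) (k + 1) =
      qPoch (q ^ 2) (q ^ 2) k * (1 - (q ^ 2) ^ (k + 1)) := by
    rw [qPoch, Finset.prod_range_succ, ← qPoch]
    ring
  have n1 := h1 (k + 1)
  have n2 := h2 (k + 1)
  have m1 := h1 k
  have m2 := h2 k
  rw [e1] at n1
  rw [e2] at n2
  have k1 := right_ne_zero_of_mul n1
  have k2 := right_ne_zero_of_mul n2
  unfold besselCoeff
  rw [e1, e2]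
  have e3 : q ^ ((k + 1) * (k + 1 + 1)) = q ^ (k * (k + 1)) * (q ^ 2) ^ (k + 1) := by
    rw [← pow_mul, ← pow_add]
    congr 1
    ring
  rw [e3, pow_succ (-1 : ℝ) k]
  generalize 1 - (q ^ ν) ^ 2 * (q ^ 2) ^ (k + 1) = X at *
  generalize 1 - (q ^ 2) ^ (k + 1) = Y at *
  field_simp

lemma radius_eq_top (hq0 : 0 < q) (hq1 : q < 1) (hν : -1 < ν) :
    (FormalMultilinearSeries.ofScalars ℝ (besselCoeff ν q)).radius = ⊤ := by
  have hp0 : (0 : ℝ) ≤ q ^ 2 := sq_nonneg q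
  have hp1 : q ^ 2 < 1 := pow_lt_one₀ hq0.le hq1 two_ne_zero
  apply FormalMultilinearSeries.ofScalars_radius_eq_top_of_tendsto
  · exact Eventually.of_forall fun n => besselCoeff_ne_zero hq0 hq1 hν n
  · have hp : Tendsto (fun k : ℕ => (q ^ 2) ^ (k + 1)) atTop (nhds 0) :=
      (tendsto_pow_atTop_nhds_zero_of_lt_one hp0 hp1).comp (tendsto_add_atTop_nat 1)
    have hlim : Tendsto (fun k : ℕ => ‖-(q ^ 2) ^ (k + 1) /
        ((1 - (q ^ ν) ^ 2 * (q ^ 2) ^ (k + 1)) * (1 - (q ^ 2) ^ (k + 1)))‖) atTop (nhds 0) := by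
      have := (hp.neg.div (((tendsto_const_nhds (x := (1 : ℝ))).sub
        (hp.const_mul ((q ^ ν) ^ 2))).mul ((tendsto_const_nhds (x := (1 : ℝ))).sub hp))
        (by simp)).norm
      simpa using this
    refine hlim.congr fun k => ?_
    have h := besselCoeff_succ hq0 hq1 hν k
    have hc := besselCoeff_ne_zero hq0 hq1 hν k
    have hne : (1 - (q ^ ν) ^ 2 * (q ^ 2) ^ (k + 1)) * (1 - (q ^ 2) ^ (k + 1)) ≠ 0 := by
      intro h0
      rw [h0, mul_zero] at h
      have : (q ^ 2) ^ (k + 1) ≠ 0 := by positivity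
      exact mul_ne_zero (neg_ne_zero.2 this) hc h.symm
    rw [← norm_div]
    congr 1
    rw [div_eq_div_iff hne hc, Nat.succ_eq_add_one, h]

lemma besselSeries_hasFPowerSeries (hq0 : 0 < q) (hq1 : q < 1) (hν : -1 < ν) :
    HasFPowerSeriesOnBall (besselSeries ν q)
      (FormalMultilinearSeries.ofScalars ℝ (besselCoeff ν q)) 0 ⊤ := by
  have h := (FormalMultilinearSeries.ofScalars ℝ (besselCoeff ν q)).hasFPowerSeriesOnBall
    (by rw [radius_eq_top hq0 hq1 hν]; exact ENNReal.zero_lt_top)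
  rw [radius_eq_top hq0 hq1 hν] at h
  have e : besselSeries ν q = (FormalMultilinearSeries.ofScalars ℝ (besselCoeff ν q)).sum := by
    funext w
    exact (FormalMultilinearSeries.ofScalars_sum_eq (besselCoeff ν q) w).symm
  rwa [e]

lemma besselSeries_analytic (hq0 : 0 < q) (hq1 : q < 1) (hν : -1 < ν) :
    AnalyticOnNhd ℝ (besselSeries ν q) Set.univ := by
  have := (besselSeries_hasFPowerSeries hq0 hq1 hν).analyticOnNhd
  simpa using this

lemma besselSeries_hasSum (hq0 : 0 < q) (hq1 : q < 1) (hν : -1 < ν) (w : ℝ) :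
    HasSum (fun k => besselCoeff ν q k * w ^ k) (besselSeries ν q w) := by
  have := (besselSeries_hasFPowerSeries hq0 hq1 hν).hasSum (y := w) (by simp)
  simpa [FormalMultilinearSeries.ofScalars_apply_eq, mul_comm] using this

lemma besselSeries_zero : besselSeries ν q 0 = 1 := by
  unfold besselSeries
  rw [tsum_eq_single 0 (by intro k hk; simp [hk])]
  simp [besselCoeff, qPoch]

/-! ### The q-difference equation -/

lemma besselSeries_recurrence (hq0 : 0 < q) (hq1 : q < 1) (hν : -1 < ν) (w : ℝ) :
    besselSeries ν q w + (q ^ ν) ^ 2 * besselSeries ν q (q ^ 2 * (q ^ 2 * w)) =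
      (1 + (q ^ ν) ^ 2 - q ^ 2 * w) * besselSeries ν q (q ^ 2 * w) := by
  have h0 := besselSeries_hasSum hq0 hq1 hν w
  have h1 := besselSeries_hasSum hq0 hq1 hν (q ^ 2 * w)
  have h2 := besselSeries_hasSum hq0 hq1 hν (q ^ 2 * (q ^ 2 * w))
  have hA := (h0.add (h2.mul_left ((q ^ ν) ^ 2))).sub (h1.mul_left (1 + (q ^ ν) ^ 2))
  -- the combined series has vanishing constant term, so its index can be shifted
  have hB := (hasSum_nat_add_iff' 1).2 hA
  have hC := h1.mul_left (-(q ^ 2 * w))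
  have e : (fun k => -(q ^ 2 * w) * (besselCoeff ν q k * (q ^ 2 * w) ^ k)) = fun k =>
      besselCoeff ν q (k + 1) * w ^ (k + 1) +
        (q ^ ν) ^ 2 * (besselCoeff ν q (k + 1) * (q ^ 2 * (q ^ 2 * w)) ^ (k + 1)) -
        (1 + (q ^ ν) ^ 2) * (besselCoeff ν q (k + 1) * (q ^ 2 * w) ^ (k + 1)) := by
    funext k
    have h := besselCoeff_succ hq0 hq1 hν k
    simp only [mul_pow _ w, mul_pow (q ^ 2) (q ^ 2 * w)]
    linear_combination (-w ^ (k + 1)) * h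
  rw [e] at hC
  have := hB.unique hC
  simp at this
  linarith

lemma qBessel_recurrence (hq0 : 0 < q) (hq1 : q < 1) (hν : -1 < ν) {z : ℝ} (hz : 0 < z) :
    qBessel ν q z + qBessel ν q (q * (q * z)) =
      ((1 + (q ^ ν) ^ 2) / q ^ ν - q ^ 2 / q ^ ν * z ^ 2) * qBessel ν q (q * z) := by
  have hA : q ^ ν ≠ 0 := (Real.rpow_pos_of_pos hq0 ν).ne'
  have h := besselSeries_recurrence hq0 hq1 hν (z ^ 2)
  rw [qBessel_eq, qBessel_eq, qBessel_eq, Real.mul_rpow hq0.le (by positivity),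
    Real.mul_rpow hq0.le hz.le, mul_pow, mul_pow]
  generalize q ^ ν = A at *
  generalize besselSeries ν q (q ^ 2 * (q ^ 2 * z ^ 2)) = G₂ at *
  generalize besselSeries ν q (q ^ 2 * z ^ 2) = G₁ at *
  generalize z ^ ν = Z at *
  have e : ((1 + A ^ 2) / A - q ^ 2 / A * z ^ 2) * (A * Z * besselConst ν q * G₁) =
      (1 + A ^ 2 - q ^ 2 * z ^ 2) * (Z * besselConst ν q * G₁) := by
    field_simp
  rw [e]
  linear_combination Z * besselConst ν q * h

/-! ### Uniform decay along the lattice below a zero -/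

lemma qBessel_bound_near_zero (hq0 : 0 < q) (hq1 : q < 1) (hν : -1 < ν) {s R : ℝ} (hs : -ν < s)
    (hR : 0 < R) : ∃ C, 0 ≤ C ∧ ∀ x, 0 < x → x ≤ R → |qBessel ν q x| ≤ C * x ^ (-s) := by
  have hcont : ContinuousOn (besselSeries ν q) (Set.Icc 0 (R ^ 2)) :=
    (besselSeries_analytic hq0 hq1 hν).continuousOn.mono (Set.subset_univ _)
  obtain ⟨C, hC⟩ := isCompact_Icc.exists_bound_of_continuousOn hcont
  have hC0 : 0 ≤ C := (norm_nonneg _).trans (hC 0 ⟨le_rfl, by positivity⟩)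
  refine ⟨R ^ (ν + s) * |besselConst ν q| * C, by positivity, fun x hx hxR => ?_⟩
  have h1 := hC (x ^ 2) ⟨by positivity, by gcongr⟩
  rw [Real.norm_eq_abs] at h1
  have h2 : x ^ ν ≤ R ^ (ν + s) * x ^ (-s) := by
    have : x ^ ν = x ^ (ν + s) * x ^ (-s) := by
      rw [← Real.rpow_add hx]
      congr 1
      ring
    rw [this]
    have : x ^ (ν + s) ≤ R ^ (ν + s) := Real.rpow_le_rpow hx.le hxR (by linarith)
    gcongr
  rw [qBessel_eq, abs_mul, abs_mul, abs_of_pos (Real.rpow_pos_of_pos hx ν)]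
  calc x ^ ν * |besselConst ν q| * |besselSeries ν q (x ^ 2)|
      ≤ (R ^ (ν + s) * x ^ (-s)) * |besselConst ν q| * C := by gcongr
    _ = _ := by ring

/-- Starting from a zero `z`, the q-difference equation makes `|J|` grow by a factor of at least
`r⁻¹` at each step of the lattice `q ^ n * z`, as long as the lattice point exceeds `R`. -/
lemma qBessel_growth (hq0 : 0 < q) (hq1 : q < 1) (hν : -1 < ν) {r R : ℝ} (hr : 0 < r) (hR0 : 0 < R)
    (hR : (1 + (q ^ ν) ^ 2) / q ^ ν + (r + r⁻¹) ≤ q ^ 2 / q ^ ν * R ^ 2)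
    {z : ℝ} (hz : 0 < z) (hz0 : qBessel ν q z = 0) (n : ℕ) (hn : R ≤ q ^ n * z) :
    |qBessel ν q (q ^ n * z)| ≤ r * |qBessel ν q (q ^ (n + 1) * z)| := by
  induction n with
  | zero =>
    simp only [pow_zero, one_mul, hz0, abs_zero]
    positivity
  | succ n ih =>
    have hx : 0 < q ^ n * z := by positivity
    have hle : q ^ (n + 1) * z ≤ q ^ n * z := by
      rw [pow_succ]
      nlinarith
    have ih' := ih (hn.trans hle)
    have hrec := qBessel_recurrence hq0 hq1 hν hx
    have e1 : q * (q ^ n * z) = q ^ (n + 1) * z := by ring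
    have e2 : q * (q ^ (n + 1) * z) = q ^ (n + 1 + 1) * z := by ring
    rw [e1, e2] at hrec
    have hA : 0 < q ^ ν := Real.rpow_pos_of_pos hq0 ν
    have hsq : q ^ 2 / q ^ ν * R ^ 2 ≤ q ^ 2 / q ^ ν * (q ^ n * z) ^ 2 := by
      have := hn.trans hle
      gcongr
    have hcoef : r + r⁻¹ ≤
        |(1 + (q ^ ν) ^ 2) / q ^ ν - q ^ 2 / q ^ ν * (q ^ n * z) ^ 2| := by
      rw [abs_sub_comm]
      exact le_trans (by linarith) (le_abs_self _)
    have h1 := abs_add_le (qBessel ν q (q ^ n * z)) (qBessel ν q (q ^ (n + 1 + 1) * z))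
    rw [hrec, abs_mul] at h1
    have h2 := mul_le_mul_of_nonneg_right hcoef (abs_nonneg (qBessel ν q (q ^ (n + 1) * z)))
    have h3 : r⁻¹ * |qBessel ν q (q ^ (n + 1) * z)| ≤ |qBessel ν q (q ^ (n + 1 + 1) * z)| := by
      linarith
    calc |qBessel ν q (q ^ (n + 1) * z)|
        = r * (r⁻¹ * |qBessel ν q (q ^ (n + 1) * z)|) := by field_simp
      _ ≤ _ := by gcongr

/-- The bound `|J(x)| ≤ C x ^ (-s)` on the lattice below a positive zero, with `C` independent of
the zero. -/
lemma qBessel_lattice_bound (hq0 : 0 < q) (hq1 : q < 1) (hν : -1 < ν) {s : ℝ} (hs : -ν < s) :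
    ∃ C, 0 ≤ C ∧ ∀ z, 0 < z → qBessel ν q z = 0 → ∀ n : ℕ,
      |qBessel ν q (q ^ n * z)| ≤ C * (q ^ n * z) ^ (-s) := by
  have hA : 0 < q ^ ν := Real.rpow_pos_of_pos hq0 ν
  have hr : 0 < q ^ s := Real.rpow_pos_of_pos hq0 s
  obtain ⟨R, hR0, hR⟩ : ∃ R : ℝ, 0 < R ∧
      (1 + (q ^ ν) ^ 2) / q ^ ν + (q ^ s + (q ^ s)⁻¹) ≤ q ^ 2 / q ^ ν * R ^ 2 := by
    have hd : 0 < q ^ 2 / q ^ ν := by positivity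
    have ht : Tendsto (fun R : ℝ => q ^ 2 / q ^ ν * R ^ 2) atTop atTop :=
      (tendsto_pow_atTop two_ne_zero).const_mul_atTop hd
    exact ((eventually_gt_atTop 0).and (ht.eventually_ge_atTop _)).exists
  obtain ⟨C, hC0, hC⟩ := qBessel_bound_near_zero hq0 hq1 hν hs hR0
  refine ⟨C, hC0, fun z hz hz0 n => ?_⟩
  -- downward induction from a lattice point below `R`
  have key : ∀ k n : ℕ, q ^ (n + k) * z ≤ R →
      |qBessel ν q (q ^ n * z)| ≤ C * (q ^ n * z) ^ (-s) := by
    intro k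
    induction k with
    | zero => exact fun n hn => hC _ (by positivity) hn
    | succ k ih =>
      intro n hn
      rcases le_total (q ^ n * z) R with h | h
      · exact hC _ (by positivity) h
      · have h1 := ih (n + 1) (by rwa [add_right_comm])
        have h2 := qBessel_growth hq0 hq1 hν hr hR0 hR hz hz0 n h
        have e : (q ^ (n + 1) * z) ^ (-s) = (q ^ s)⁻¹ * (q ^ n * z) ^ (-s) := by
          rw [pow_succ', mul_assoc, Real.mul_rpow hq0.le (by positivity), Real.rpow_neg hq0.le]
        calc |qBessel ν q (q ^ n * z)| ≤ q ^ s * |qBessel ν q (q ^ (n + 1) * z)| := h2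
          _ ≤ q ^ s * (C * (q ^ (n + 1) * z) ^ (-s)) := by gcongr
          _ = C * (q ^ n * z) ^ (-s) := by
            rw [e]
            field_simp
  have ht : Tendsto (fun k : ℕ => q ^ k * z) atTop (nhds 0) := by
    simpa using (tendsto_pow_atTop_nhds_zero_of_lt_one hq0.le hq1).mul_const z
  obtain ⟨k, hk, hk'⟩ := ((ht.eventually_le_const hR0).and (eventually_ge_atTop n)).exists
  refine key (k - n) n ?_
  rwa [Nat.add_sub_cancel' hk']

/-! ### The zeros tend to infinity -/

lemma zeros_tendsto_atTop (hq0 : 0 < q) (hq1 : q < 1) (hν : -1 < ν) (hP : besselConst ν q ≠ 0)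
    {j : ℕ → ℝ} (hjpos : ∀ k, 1 ≤ k → 0 < j k) (hjzero : ∀ k, 1 ≤ k → qBessel ν q (j k) = 0)
    (hjmono : ∀ k, 1 ≤ k → j k < j (k + 1)) : Tendsto j atTop atTop := by
  rw [← tendsto_add_atTop_iff_nat 1]
  have hmono : StrictMono fun k => j (k + 1) := strictMono_nat_of_lt_succ fun k =>
    hjmono (k + 1) (by omega)
  rcases tendsto_atTop_of_monotone hmono.monotone with h | ⟨L, hL⟩
  · exact h
  exfalso
  have hlt : ∀ k, j (k + 1) < L := fun k =>
    (hmono (Nat.lt_succ_self k)).trans_le (hmono.monotone.ge_of_tendsto hL (k + 1))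
  have hz : ∀ k, besselSeries ν q (j (k + 1) ^ 2) = 0 := by
    intro k
    have h1 := hjzero (k + 1) (by omega)
    have h2 := (Real.rpow_pos_of_pos (hjpos (k + 1) (by omega)) ν).ne'
    rw [qBessel_eq] at h1
    simpa [h2, hP] using h1
  have hne : Tendsto (fun k => j (k + 1) ^ 2) atTop (nhdsWithin (L ^ 2) {L ^ 2}ᶜ) := by
    refine tendsto_nhdsWithin_iff.2 ⟨hL.pow 2, Eventually.of_forall fun k => ?_⟩
    exact (pow_lt_pow_left₀ (hlt k) (hjpos (k + 1) (by omega)).le two_ne_zero).ne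
  have hfreq : ∃ᶠ w in nhdsWithin (L ^ 2) {L ^ 2}ᶜ, besselSeries ν q w = 0 :=
    hne.frequently (Frequently.of_forall hz)
  have h0 := (besselSeries_analytic hq0 hq1 hν).eqOn_zero_of_preconnected_of_frequently_eq_zero
    isPreconnected_univ (Set.mem_univ _) hfreq (Set.mem_univ 0)
  rw [besselSeries_zero] at h0
  exact one_ne_zero h0

end

theorem stmt12 (q ν : ℝ) (hq0 : 0 < q) (hq1 : q < 1) (hν : -1 < ν)
    (j : ℕ → ℝ)
    (hjpos : ∀ k, 1 ≤ k → 0 < j k)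
    (hjzero : ∀ k, 1 ≤ k → qBessel ν q (j k) = 0)
    (hjmono : ∀ k, 1 ≤ k → j k < j (k + 1))
    (hjall : ∀ x, 0 < x → qBessel ν q x = 0 → ∃ k, 1 ≤ k ∧ x = j k)
    (f : ℝ → ℝ)
    (hf : Summable fun n : ℕ => q ^ n * q ^ n * |f (q ^ n)| ^ 2) :
    Tendsto (fun m : ℕ => qInt q (fun t => t * f t * qBessel ν q (q * j m * t)))
      atTop (nhds 0) := by
  -- a vanishing prefactor would make `qBessel` identically zero, so it need not be excluded
  by_cases hP : besselConst ν q = 0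
  · have : ∀ z, qBessel ν q z = 0 := fun z => by rw [qBessel_eq, hP]; ring
    simp [qInt, this]
  have hj := zeros_tendsto_atTop hq0 hq1 hν hP hjpos hjzero hjmono
  obtain ⟨s, hs, hs1⟩ := exists_between (show max (-ν) 0 < 1 from max_lt (by linarith) one_pos)
  obtain ⟨hsν, hs0⟩ := max_lt_iff.1 hs
  obtain ⟨C, hC0, hC⟩ := qBessel_lattice_bound hq0 hq1 hν hsν
  have hu0 : 0 < q ^ (1 - s) := Real.rpow_pos_of_pos hq0 _
  have hu1 : q ^ (1 - s) < 1 := Real.rpow_lt_one hq0.le hq1 (by linarith)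
  have hsum : Summable fun n : ℕ => q ^ n * |f (q ^ n)| * (q ^ (1 - s)) ^ n := by
    have hgeo : Summable fun n : ℕ => ((q ^ (1 - s)) ^ 2) ^ n :=
      summable_geometric_of_lt_one (by positivity) (pow_lt_one₀ hu0.le hu1 two_ne_zero)
    refine Summable.of_nonneg_of_le (fun n => by positivity) (fun n => ?_) (hf.add hgeo)
    rw [← pow_mul, mul_comm 2 n, pow_mul]
    nlinarith [sq_nonneg (q ^ n * |f (q ^ n)| - (q ^ (1 - s)) ^ n),
      sq_nonneg (q ^ n * |f (q ^ n)|), sq_nonneg ((q ^ (1 - s)) ^ n)]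
  have hbound : ∀ᶠ m in atTop, ‖qInt q (fun t => t * f t * qBessel ν q (q * j m * t))‖ ≤
      ((1 - q) * (C * q ^ (-s) * ∑' n : ℕ, q ^ n * |f (q ^ n)| * (q ^ (1 - s)) ^ n)) *
        j m ^ (-s) := by
    filter_upwards [eventually_ge_atTop 1] with m hm
    have hz := hjpos m hm
    have hterm : ∀ n : ℕ,
        ‖q ^ n * f (q ^ n) * qBessel ν q (q * j m * q ^ n) * q ^ n‖ ≤
          C * q ^ (-s) * j m ^ (-s) * (q ^ n * |f (q ^ n)| * (q ^ (1 - s)) ^ n) := by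
      intro n
      have h1 := hC (j m) hz (hjzero m hm) (n + 1)
      have e1 : q * j m * q ^ n = q ^ (n + 1) * j m := by ring
      have e2 : q ^ n * (q ^ (n + 1) * j m) ^ (-s) =
          q ^ (-s) * j m ^ (-s) * (q ^ (1 - s)) ^ n := by
        have e3 : (q ^ (1 - s)) ^ n = q ^ n * (q ^ n) ^ (-s) := by
          rw [sub_eq_add_neg, Real.rpow_add hq0, Real.rpow_one, mul_pow,
            ← Real.rpow_mul_natCast hq0.le, mul_comm (-s) (n : ℝ), Real.rpow_natCast_mul hq0.le]
        rw [e3, pow_succ', Real.mul_rpow (by positivity) hz.le,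
          Real.mul_rpow hq0.le (by positivity)]
        ring
      rw [e1, norm_mul, norm_mul, norm_mul, Real.norm_eq_abs, Real.norm_eq_abs, Real.norm_eq_abs,
        abs_of_pos (pow_pos hq0 n)]
      calc q ^ n * |f (q ^ n)| * |qBessel ν q (q ^ (n + 1) * j m)| * q ^ n
          ≤ q ^ n * |f (q ^ n)| * (C * (q ^ (n + 1) * j m) ^ (-s)) * q ^ n := by gcongr
        _ = C * (q ^ n * |f (q ^ n)|) * (q ^ n * (q ^ (n + 1) * j m) ^ (-s)) := by ring
        _ = _ := by rw [e2]; ring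
    have h2 := tsum_of_norm_bounded (hsum.hasSum.mul_left (C * q ^ (-s) * j m ^ (-s))) hterm
    rw [qInt, norm_mul, Real.norm_of_nonneg (by linarith : 0 ≤ 1 - q)]
    calc _ ≤ (1 - q) * _ := mul_le_mul_of_nonneg_left h2 (by linarith)
      _ = _ := by ring
  refine squeeze_zero_norm' hbound ?_
  simpa using ((tendsto_rpow_neg_atTop hs0).comp hj).const_mul
    ((1 - q) * (C * q ^ (-s) * ∑' n : ℕ, q ^ n * |f (q ^ n)| * (q ^ (1 - s)) ^ n))
end
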